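/- Let d ≥ 1 be an integer and δ ∈ (0,1). Let f : Sym_d(ℝ) → ℝ be a Lipschitz continuous function on the space of symmetric d×d real matrices such that at every point M where f is Fréchet differentiable there exists a ∈ 𝕊_δ with Df(M)(w) = tr(a w) for all symmetric w. Then for every symmetric d×d matrix M there exists a ∈ 𝕊_δ such that f(M) = f(0) + tr(a M). -/

import Mathlib

/-!
Along a segment that meets the non-differentiability set of `f` in a null set, `f y - f x` is the
integral of `Df (x + t (y - x)) (y - x)`, an average of values in the set `{B a (y - x) | a ∈ K}`.
That set is closed and convex because `K` is compact and convex, so it contains the average. By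
Rademacher's and Fubini's theorems almost every translate of a given segment is of this kind, and
continuity of `f` covers the others. The case of interest is `K = 𝕊_δ` with `B a w = tr (a w)`.
-/

open scoped BigOperators NNReal

attribute [local instance] Matrix.frobeniusNormedAddCommGroup Matrix.frobeniusNormedSpace

noncomputable section

/-- `𝕊_θ`: symmetric `d×d` matrices with `θ|ξ|² ≤ ⟨aξ,ξ⟩ ≤ θ⁻¹|ξ|²`. -/
def Sdelta (d : ℕ) (θ : ℝ) : Set (Matrix (Fin d) (Fin d) ℝ) :=
  {a | a.IsHermitian ∧ ∀ ξ : Fin d → ℝ,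
    θ * (∑ i, ξ i ^ 2) ≤ (∑ i, ∑ j, a i j * ξ j * ξ i) ∧
      (∑ i, ∑ j, a i j * ξ j * ξ i) ≤ θ⁻¹ * (∑ i, ξ i ^ 2)}

/-- Frobenius norm of a matrix. -/
def frobNorm (d : ℕ) (M : Matrix (Fin d) (Fin d) ℝ) : ℝ :=
  Real.sqrt (∑ i, ∑ j, (M i j) ^ 2)

/-- Euclidean norm of a vector. -/
def eunorm {n : ℕ} (u : Fin n → ℝ) : ℝ :=
  Real.sqrt (∑ i, u i ^ 2)

/-- Pucci's operator `P₀(M) = 2δ⁻¹ Σ λ_k⁺(M) − (δ/2) Σ λ_k⁻(M)` (for Hermitian `M`;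
junk value `0` otherwise). -/
def pucci (d : ℕ) (δ : ℝ) (M : Matrix (Fin d) (Fin d) ℝ) : ℝ :=
  if h : M.IsHermitian then
    2 * δ⁻¹ * (∑ k, max (h.eigenvalues k) 0) - (δ / 2) * (∑ k, max (-(h.eigenvalues k)) 0)
  else 0

lemma hasFDerivWithinAt_of_comp_subtype {𝕜 E F : Type*} [NontriviallyNormedField 𝕜]
    [NormedAddCommGroup E] [NormedSpace 𝕜 E] [NormedAddCommGroup F] [NormedSpace 𝕜 F]
    {S : Submodule 𝕜 E} {P : E →L[𝕜] S} (hP : ∀ x : S, P x = x) {f : E → F} {x : S}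
    {f' : S →L[𝕜] F} (h : HasFDerivAt (fun y : S ↦ f y) f' x) :
    HasFDerivWithinAt f (f' ∘L P) S x := by
  have hfP : HasFDerivAt (fun y ↦ f (P y)) (f' ∘L P) (x : E) := by
    rw [← hP x] at h
    exact h.comp (x : E) P.hasFDerivAt
  have heq : ∀ y ∈ S, f y = f (P y) := fun y hy ↦ by rw [hP ⟨y, hy⟩]
  exact hfP.hasFDerivWithinAt.congr heq (heq x x.2)

section LipschitzIncrements

open MeasureTheory Set

lemma slope_mem_of_ae_deriv_mem {f : ℝ → ℝ} {a b : ℝ} (hf : AbsolutelyContinuousOnInterval f a b)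
    (hab : a < b) {V : Set ℝ} (hV : Convex ℝ V) (hVc : IsClosed V)
    (h : ∀ᵐ t ∂volume.restrict (Ioc a b), deriv f t ∈ V) : slope f a b ∈ V := by
  have hmean : slope f a b = ⨍ t in a..b, deriv f t := by
    rw [interval_average_eq_div, hf.integral_deriv_eq_sub, slope_def_field]
  rw [hmean, uIoc_of_le hab.le]
  refine hV.set_average_mem hVc (by simp [hab]) (by simp) h ?_
  exact (intervalIntegrable_iff_integrableOn_Ioc_of_le hab.le).1 hf.intervalIntegrable_deriv

variable {E : Type*} [NormedAddCommGroup E] [NormedSpace ℝ E] {f : E → ℝ} {C : ℝ≥0} {V : Set ℝ}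

lemma sub_mem_of_ae_fderiv_mem_along_segment (hf : LipschitzWith C f) (hV : Convex ℝ V)
    (hVc : IsClosed V) {x v : E}
    (h : ∀ᵐ t : ℝ, DifferentiableAt ℝ f (x + t • v) ∧ fderiv ℝ f (x + t • v) v ∈ V) :
    f (x + v) - f x ∈ V := by
  let line : ℝ → E := fun t ↦ x + t • v
  have hline : LipschitzWith ‖v‖₊ line :=
    LipschitzWith.of_dist_le_mul fun s t ↦ by
      simp [line, dist_eq_norm, ← sub_smul, norm_smul, mul_comm]
  have hac : AbsolutelyContinuousOnInterval (f ∘ line) 0 1 :=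
    (hf.comp hline).lipschitzOnWith.absolutelyContinuousOnInterval
  have hderiv : ∀ᵐ t, deriv (f ∘ line) t ∈ V := by
    filter_upwards [h] with t ⟨hdiff, hmem⟩
    have hline' : HasDerivAt line v t := by
      simpa [line] using ((hasDerivAt_id t).smul_const v).const_add x
    rwa [(hdiff.hasFDerivAt.comp_hasDerivAt t hline').deriv]
  simpa [slope_def_field, line] using
    slope_mem_of_ae_deriv_mem hac zero_lt_one hV hVc (ae_restrict_of_ae hderiv)

lemma sub_mem_of_fderiv_mem [FiniteDimensional ℝ E] (hf : LipschitzWith C f) (hV : Convex ℝ V)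
    (hVc : IsClosed V) {v : E} (h : ∀ x, DifferentiableAt ℝ f x → fderiv ℝ f x v ∈ V) (x : E) :
    f (x + v) - f x ∈ V := by
  borelize E
  let μ : Measure E := Measure.addHaar
  have hlines : ∀ᵐ y ∂μ, ∀ᵐ t : ℝ, DifferentiableAt ℝ f (y + t • v) :=
    (ae_ae_add_linearMap_mem_iff (LinearMap.toSpanSingleton ℝ E v) volume μ
      (measurableSet_of_differentiableAt ℝ f)).2 hf.ae_differentiableAt
  have hae : ∀ᵐ y ∂μ, f (y + v) - f y ∈ V := hlines.mono fun y hy ↦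
    sub_mem_of_ae_fderiv_mem_along_segment hf hV hVc (hy.mono fun _ ht ↦ ⟨ht, h _ ht⟩)
  have hclosed : IsClosed {y | f (y + v) - f y ∈ V} :=
    hVc.preimage ((hf.continuous.comp (continuous_add_const v)).sub hf.continuous)
  exact hclosed.closure_subset (Measure.dense_of_ae hae x)

theorem hadamard_representation_general {F : Type*} [AddCommGroup F] [Module ℝ F]
    [TopologicalSpace F] {S : Submodule ℝ E} [FiniteDimensional ℝ S] (hf : LipschitzOnWith C f S)
    (B : F →L[ℝ] StrongDual ℝ E) {K : Set F} (hK : IsCompact K) (hKconv : Convex ℝ K)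
    (hderiv : ∀ x (f' : StrongDual ℝ E), x ∈ S → HasFDerivWithinAt f f' S x →
      ∃ a ∈ K, ∀ w ∈ S, f' w = B a w)
    {x y : E} (hx : x ∈ S) (hy : y ∈ S) : ∃ a ∈ K, f y = f x + B a (y - x) := by
  obtain ⟨P, hP⟩ := Submodule.ClosedComplemented.of_finiteDimensional S
  let φ : F →L[ℝ] ℝ := ContinuousLinearMap.apply ℝ ℝ (y - x) ∘L B
  have hfderiv : ∀ z : S, DifferentiableAt ℝ (fun z : S ↦ f z) z →
      fderiv ℝ (fun z : S ↦ f z) z (⟨y, hy⟩ - ⟨x, hx⟩) ∈ φ '' K := fun z hz ↦ by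
    obtain ⟨a, ha, hw⟩ :=
      hderiv z _ z.2 (hasFDerivWithinAt_of_comp_subtype hP hz.hasFDerivAt)
    refine ⟨a, ha, ?_⟩
    simpa [hP ⟨x, hx⟩, hP ⟨y, hy⟩, φ] using (hw (y - x) (S.sub_mem hy hx)).symm
  obtain ⟨a, ha, hsub⟩ := sub_mem_of_fderiv_mem hf.to_restrict
    (hKconv.linear_image φ.toLinearMap) (hK.image φ.continuous).isClosed hfderiv ⟨x, hx⟩
  refine ⟨a, ha, eq_add_of_sub_eq' ?_⟩
  simpa [φ] using hsub.symm

end LipschitzIncrements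

section Ellipticity

open Matrix Set

lemma two_mul_abs_apply_le_of_posSemidef {n : Type*} {A : Matrix n n ℝ} (hA : A.PosSemidef)
    (i j : n) : 2 * |A i j| ≤ A i i + A j j := by
  have hsymm : A j i = A i j := hA.isHermitian.apply i j
  have hquad (s : ℝ) : 0 ≤ A i i + 2 * s * A i j + s ^ 2 * A j j :=
    calc
      0 ≤ star ![1, s] ⬝ᵥ A.submatrix ![i, j] ![i, j] *ᵥ ![1, s] :=
        (hA.submatrix _).dotProduct_mulVec_nonneg _
      _ = A i i + 2 * s * A i j + s ^ 2 * A j j := by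
        simp only [dotProduct, mulVec, Fin.sum_univ_two, submatrix_apply, star_trivial,
          cons_val_zero, cons_val_one, hsymm]
        ring
  cases abs_cases (A i j) <;> linarith [hquad 1, hquad (-1)]

variable {d : ℕ} {θ : ℝ}

lemma mem_Sdelta_iff {a : Matrix (Fin d) (Fin d) ℝ} :
    a ∈ Sdelta d θ ↔
      a.IsHermitian ∧ ∀ ξ, ξ ⬝ᵥ a *ᵥ ξ ∈ Icc (θ * (ξ ⬝ᵥ ξ)) (θ⁻¹ * (ξ ⬝ᵥ ξ)) := by
  simp only [Sdelta, mem_ofPred_eq, mem_Icc, dotProduct, mulVec, Finset.mul_sum, pow_two, mul_comm,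
    mul_left_comm]

lemma Sdelta_eq_inter : Sdelta d θ =
    (selfAdjoint.submodule ℝ (Matrix (Fin d) (Fin d) ℝ) : Set (Matrix (Fin d) (Fin d) ℝ)) ∩
      ⋂ ξ, (fun a ↦ ξ ⬝ᵥ a *ᵥ ξ) ⁻¹' Icc (θ * (ξ ⬝ᵥ ξ)) (θ⁻¹ * (ξ ⬝ᵥ ξ)) := by
  ext a
  rw [mem_Sdelta_iff, mem_inter_iff, mem_iInter]
  rfl

lemma convex_Sdelta : Convex ℝ (Sdelta d θ) := by
  rw [Sdelta_eq_inter]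
  refine (Submodule.convex _).inter <| convex_iInter fun ξ ↦ (convex_Icc _ _).is_linear_preimage ?_
  constructor <;> intros <;> simp [add_mulVec, smul_mulVec]

lemma isClosed_Sdelta : IsClosed (Sdelta d θ) := by
  rw [Sdelta_eq_inter]
  refine (Submodule.closed_of_finiteDimensional _).inter <| isClosed_iInter fun ξ ↦
    isClosed_Icc.preimage ?_
  fun_prop

lemma posSemidef_of_mem_Sdelta (hθ : 0 ≤ θ) {a : Matrix (Fin d) (Fin d) ℝ}
    (ha : a ∈ Sdelta d θ) : a.PosSemidef := by
  rw [mem_Sdelta_iff] at ha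
  exact .of_dotProduct_mulVec_nonneg ha.1 fun ξ ↦
    (mul_nonneg hθ (dotProduct_star_self_nonneg ξ)).trans (ha.2 ξ).1

lemma Sdelta_subset_matrix_Icc (hθ : 0 ≤ θ) :
    Sdelta d θ ⊆ (Icc (-θ⁻¹) θ⁻¹).matrix := fun a ha i j ↦ by
  have hdiag (k : Fin d) : a k k ≤ θ⁻¹ := by
    simpa using ((mem_Sdelta_iff.1 ha).2 (Pi.single k 1)).2
  have hpos := two_mul_abs_apply_le_of_posSemidef (posSemidef_of_mem_Sdelta hθ ha) i j
  exact abs_le.1 (by linarith [hdiag i, hdiag j])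

lemma isCompact_Sdelta (hθ : 0 ≤ θ) : IsCompact (Sdelta d θ) :=
  isCompact_Icc.matrix.of_isClosed_subset isClosed_Sdelta (Sdelta_subset_matrix_Icc hθ)

/-- The pairing `(a, w) ↦ tr (a w)`, presented as the linear map that turns a matrix `a` into the
functional it represents. -/
def tracePairing (n : Type*) [Fintype n] : Matrix n n ℝ →L[ℝ] StrongDual ℝ (Matrix n n ℝ) :=
  ((LinearMap.mul ℝ (Matrix n n ℝ)).compr₂ (traceLinearMap n ℝ ℝ)).toContinuousBilinearMap

end Ellipticity

/-- The Hadamard-formula representation established in the proof of Lemma 3.2 of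
Krylov, "An ersatz existence theorem for fully nonlinear parabolic equations
without convexity assumptions": a Lipschitz function on symmetric matrices whose
derivative (at each point of differentiability along the symmetric matrices)
lies in `𝕊_δ` satisfies `f(M) = f(0) + tr(a M)` for some `a ∈ 𝕊_δ`. -/
theorem hadamard_representation (d : ℕ) (hd : 1 ≤ d) (δ : ℝ) (hδ : δ ∈ Set.Ioo (0:ℝ) 1)
    (f : Matrix (Fin d) (Fin d) ℝ → ℝ)
    (hlip : ∃ C : ℝ≥0, LipschitzOnWith C f {A : Matrix (Fin d) (Fin d) ℝ | A.IsHermitian})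
    (hderiv : ∀ (M : Matrix (Fin d) (Fin d) ℝ) (f' : Matrix (Fin d) (Fin d) ℝ →L[ℝ] ℝ),
      M.IsHermitian →
      HasFDerivWithinAt f f' {A : Matrix (Fin d) (Fin d) ℝ | A.IsHermitian} M →
      ∃ a ∈ Sdelta d δ, ∀ w : Matrix (Fin d) (Fin d) ℝ, w.IsHermitian →
        f' w = Matrix.trace (a * w)) :
    ∀ M : Matrix (Fin d) (Fin d) ℝ, M.IsHermitian →
      ∃ a ∈ Sdelta d δ, f M = f 0 + Matrix.trace (a * M) := by
  obtain ⟨C, hC⟩ := hlip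
  intro M hM
  have hrep := hadamard_representation_general
    (S := selfAdjoint.submodule ℝ (Matrix (Fin d) (Fin d) ℝ)) hC (tracePairing (Fin d))
    (isCompact_Sdelta hδ.1.le) convex_Sdelta hderiv (zero_mem _) hM
  rwa [sub_zero] at hrep
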